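/- Let d = 2^n, let x ∈ ℝ^d, let G be a d×d matrix with i.i.d. N(0,1) entries and z = Gx, and let y = √d·H·D_1·H·D_2·x where H is the normalized Walsh–Hadamard matrix and D_1, D_2 are independent random sign diagonal matrices. Then for every differentiable function g : ℝ → ℝ with |g(t)| ≤ 1 and |g'(t)| ≤ 1 for all t, |(1/d)·Σ_{i=1}^d E[g(z(i))] − (1/d)·Σ_{i=1}^d E[g(y(i))]| ≤ 6‖x‖₂/√d. -/

import Mathlib

open MeasureTheory ProbabilityTheory Real

/-- The Rademacher distribution on `ℝ`: `±1` each with probability `1/2`. -/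
noncomputable def rademacher : Measure ℝ :=
  (2 : ENNReal)⁻¹ • Measure.dirac 1 + (2 : ENNReal)⁻¹ • Measure.dirac (-1)

/-- The normalized Walsh–Hadamard matrix of size `2^n`: entry `(i,j)` is
`(−1)^{⟨i,j⟩}/√(2^n)` where `⟨i,j⟩` is the inner product of the binary representations of
the (0-indexed) `i` and `j`. -/
noncomputable def hadamardMatrix (n : ℕ) : Matrix (Fin (2 ^ n)) (Fin (2 ^ n)) ℝ :=
  Matrix.of fun i j =>
    (-1 : ℝ) ^ (∑ k : Fin n, ((i : ℕ).testBit k).toNat * ((j : ℕ).testBit k).toNat) /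
      Real.sqrt (2 ^ n)

/-!
Conditionally on `D₂`, each `y(i)` is a linear form `∑ aⱼ εⱼ` in the diagonal `ε` of `D₁`, and
orthogonality of `H` makes `∑ aⱼ² = ‖x‖²` for every value of `D₂`; on the other side `z(i)` is
exactly `N(0, ‖x‖²)`.

After rescaling to `∑ aⱼ² = 1`, Stein's method compares the two. For an `L`-Lipschitz `g` the
solution `f` of `f' w - w f w = g w - E g(N)` satisfies `|f| ≤ 7L/3` and `|w f' w| ≤ 10L/3`, both
obtained by comparing `φ f` and `φ f'` with explicit supersolutions, where `φ` is the Gaussian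
density; hence `f'` is `20L/3`-Lipschitz. Flipping one sign `εⱼ` turns `E[f' S - S f S]` into a sum
of trapezoid-rule errors of `f` on intervals of length `2|aⱼ|`, so it is at most `10L/3 · ∑ |aⱼ|³`.

Finally, every `aⱼ` is itself a Rademacher sum in the diagonal of `D₂`, with variance `‖x‖²/d`, and
the fourth-moment bound gives `E ∑ |aⱼ|³ ≤ √3 ‖x‖³/√d`. The total constant is `(10/3)√3 < 6`.
-/

section Comparison

open Filter Set Topology

variable {E : Type*} [NormedAddCommGroup E] [NormedSpace ℝ E]

lemma norm_le_of_norm_deriv_le_neg_deriv {F F' : ℝ → E} {B B' : ℝ → ℝ} {a : ℝ}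
    (hF : ∀ t ≥ a, HasDerivAt F (F' t) t) (hB : ∀ t ≥ a, HasDerivAt B (B' t) t)
    (hle : ∀ t ≥ a, ‖F' t‖ ≤ -B' t)
    (hF0 : Tendsto F atTop (𝓝 0)) (hB0 : Tendsto B atTop (𝓝 0)) : ‖F a‖ ≤ B a := by
  have increment (b : ℝ) (hab : a ≤ b) : ‖F b - F a‖ ≤ B a - B b := by
    refine image_norm_le_of_norm_deriv_right_le_deriv_boundary' (a := a) (b := b)
      (f := fun t ↦ F t - F a) (f' := F') (B := fun t ↦ B a - B t) (B' := fun t ↦ -B' t)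
      (fun t ht ↦ ((hF t ht.1).sub_const _).continuousAt.continuousWithinAt)
      (fun t ht ↦ ((hF t ht.1).sub_const _).hasDerivWithinAt) (by simp)
      (fun t ht ↦ ((hB t ht.1).const_sub _).continuousAt.continuousWithinAt)
      (fun t ht ↦ ((hB t ht.1).const_sub _).hasDerivWithinAt)
      (fun t ht ↦ hle t ht.1) (right_mem_Icc.2 hab)
  simpa using le_of_tendsto_of_tendsto (hF0.sub_const (F a)).norm (hB0.const_sub (B a))
    (eventually_atTop.2 ⟨a, increment⟩)

lemma hasDerivAt_setIntegral_Iic [CompleteSpace E] {h : ℝ → E} (hint : Integrable h)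
    {w : ℝ} (hmeas : StronglyMeasurableAtFilter h (𝓝 w)) (hcont : ContinuousAt h w) :
    HasDerivAt (fun b ↦ ∫ t in Iic b, h t) (h w) w := by
  have split : (fun b ↦ ∫ t in Iic b, h t)
      = fun b ↦ (∫ t in Iic w, h t) + ∫ t in w..b, h t := by
    funext b
    rw [← intervalIntegral.integral_Iic_sub_Iic hint.integrableOn hint.integrableOn,
      add_sub_cancel]
  rw [split]
  exact (intervalIntegral.integral_hasDerivAt_right hint.intervalIntegrable hmeas
    hcont).const_add _

end Comparison

section GaussianDensity

open Filter Set Topology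

open scoped NNReal

lemma hasDerivAt_gaussianPDFReal (m : ℝ) (v : ℝ≥0) (t : ℝ) :
    HasDerivAt (gaussianPDFReal m v) (-((t - m) / v) * gaussianPDFReal m v t) t := by
  have hexponent : HasDerivAt (fun s : ℝ ↦ -(s - m) ^ 2 / (2 * v)) (-((t - m) / v)) t := by
    convert! ((((hasDerivAt_id t).sub_const m).pow 2).neg).div_const (2 * (v : ℝ)) using 1
    simp only [id, Nat.cast_ofNat, Nat.add_one_sub_one, pow_one, mul_one]
    rw [← mul_neg, mul_div_mul_left _ _ two_ne_zero, neg_div]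
  convert! hexponent.exp.const_mul (√(2 * π * v))⁻¹ using 1
  rw [gaussianPDFReal]
  ring

lemma tendsto_pow_mul_gaussianPDFReal_atTop (k : ℕ) :
    Tendsto (fun t ↦ t ^ k * gaussianPDFReal 0 1 t) atTop (𝓝 0) := by
  have hexp : Tendsto (fun t : ℝ ↦ exp (-(1 / 2) * t)) atTop (𝓝 0) :=
    tendsto_exp_atBot.comp (tendsto_id.const_mul_atTop_of_neg (by norm_num))
  have hsq := (rpow_mul_exp_neg_mul_sq_isLittleO_exp_neg one_half_pos (k : ℝ)).trans_tendsto hexp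
  have hscaled := hsq.const_mul (√(2 * π))⁻¹
  rw [mul_zero] at hscaled
  refine hscaled.congr fun t ↦ ?_
  simp only [gaussianPDFReal, rpow_natCast, NNReal.coe_one, mul_one, sub_zero]
  rw [show -t ^ 2 / 2 = -(1 / 2) * t ^ 2 by ring]
  ring

lemma continuous_gaussianPDFReal (m : ℝ) (v : ℝ≥0) : Continuous (gaussianPDFReal m v) := by
  unfold gaussianPDFReal
  fun_prop

lemma setIntegral_gaussianReal_eq_setIntegral_smul {E : Type*} [NormedAddCommGroup E]
    [NormedSpace ℝ E] {m : ℝ} {v : ℝ≥0} (hv : v ≠ 0) (s : Set ℝ) (h : ℝ → E) :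
    ∫ t in s, h t ∂gaussianReal m v = ∫ t in s, gaussianPDFReal m v t • h t := by
  simp [gaussianReal, hv, setIntegral_withDensity_eq_setIntegral_toReal_smul' s
    (measurable_gaussianPDF _ _) (ae_of_all _ fun _ ↦ gaussianPDF_lt_top)]

lemma integrable_gaussianReal_iff_integrable_smul {E : Type*} [NormedAddCommGroup E]
    [NormedSpace ℝ E] {m : ℝ} {v : ℝ≥0} (hv : v ≠ 0) {h : ℝ → E} :
    Integrable h (gaussianReal m v) ↔ Integrable fun t ↦ gaussianPDFReal m v t • h t := by
  rw [gaussianReal_of_var_ne_zero m hv,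
    integrable_withDensity_iff_integrable_smul' (measurable_gaussianPDF m v)
      (ae_of_all _ fun _ ↦ gaussianPDF_lt_top)]
  simp only [toReal_gaussianPDF]

lemma hasDerivAt_setIntegral_Iic_gaussianReal {E : Type*} [NormedAddCommGroup E]
    [NormedSpace ℝ E] [CompleteSpace E] {m : ℝ} {v : ℝ≥0} (hv : v ≠ 0) {h : ℝ → E}
    (hcont : Continuous h) (hint : Integrable h (gaussianReal m v)) (w : ℝ) :
    HasDerivAt (fun b ↦ ∫ t in Iic b, h t ∂gaussianReal m v) (gaussianPDFReal m v w • h w) w := by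
  simp only [setIntegral_gaussianReal_eq_setIntegral_smul hv]
  have hcont' : Continuous fun t ↦ gaussianPDFReal m v t • h t :=
    (continuous_gaussianPDFReal m v).smul hcont
  exact hasDerivAt_setIntegral_Iic ((integrable_gaussianReal_iff_integrable_smul hv).1 hint)
    (hcont'.stronglyMeasurableAtFilter _ _) hcont'.continuousAt

lemma integral_abs_gaussianReal_le_one : ∫ t, |t| ∂gaussianReal 0 1 ≤ 1 := by
  have hsq : Integrable (fun t : ℝ ↦ t ^ 2) (gaussianReal 0 1) :=
    (memLp_id_gaussianReal (μ := 0) (v := 1) 2).integrable_sq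
  have second_moment : ∫ t, t ^ 2 ∂gaussianReal 0 1 = 1 := by
    simpa [variance_of_integral_eq_zero aemeasurable_id (integral_id_gaussianReal (μ := 0))]
      using variance_id_gaussianReal (μ := 0) (v := 1)
  calc ∫ t, |t| ∂gaussianReal 0 1
      ≤ ∫ t, (1 + t ^ 2) / 2 ∂gaussianReal 0 1 := by
        refine integral_mono_of_nonneg (ae_of_all _ fun t ↦ abs_nonneg t)
          (((integrable_const 1).add hsq).div_const 2) (ae_of_all _ fun t ↦ ?_)
        have := two_mul_le_add_sq |t| 1
        rw [sq_abs] at this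
        dsimp only
        linarith
    _ = 1 := by
        rw [integral_div, integral_add (integrable_const 1) hsq, second_moment]
        simp

lemma integrable_gaussianReal_of_lipschitzWith {E : Type*} [NormedAddCommGroup E]
    {g : ℝ → E} {L : ℝ≥0} (hg : LipschitzWith L g) (m : ℝ) (v : ℝ≥0) :
    Integrable g (gaussianReal m v) := by
  have hid : Integrable (fun t : ℝ ↦ t) (gaussianReal m v) :=
    (memLp_id_gaussianReal 1).integrable le_rfl
  refine ((integrable_const ‖g 0‖).add (hid.abs.const_mul (L : ℝ))).mono'
    hg.continuous.aestronglyMeasurable (ae_of_all _ fun t ↦ ?_)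
  have := hg.norm_sub_le t 0
  rw [sub_zero, norm_eq_abs] at this
  have := norm_le_insert' (g t) (g 0)
  simp only [Pi.add_apply]
  linarith

end GaussianDensity

section SteinSolution

open Filter Set Topology

open scoped NNReal

lemma abs_le_of_hasDerivAt_mul_self_add {u r B B' : ℝ → ℝ} {w : ℝ}
    (hu : ∀ t ≥ w, HasDerivAt u (t * u t + r t) t) (hB : ∀ t ≥ w, HasDerivAt B (B' t) t)
    (hr : ∀ t ≥ w, |r t| ≤ t * B t - B' t)
    (hu0 : Tendsto (fun t ↦ gaussianPDFReal 0 1 t * u t) atTop (𝓝 0))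
    (hB0 : Tendsto (fun t ↦ gaussianPDFReal 0 1 t * B t) atTop (𝓝 0)) : |u w| ≤ B w := by
  have hφ (t : ℝ) : HasDerivAt (gaussianPDFReal 0 1) (-t * gaussianPDFReal 0 1 t) t := by
    simpa using hasDerivAt_gaussianPDFReal 0 1 t
  have hweighted := norm_le_of_norm_deriv_le_neg_deriv
    (F' := fun t ↦ gaussianPDFReal 0 1 t * r t)
    (B' := fun t ↦ -(gaussianPDFReal 0 1 t * (t * B t - B' t)))
    (fun t ht ↦ ((hφ t).mul (hu t ht)).congr_deriv (by ring))
    (fun t ht ↦ ((hφ t).mul (hB t ht)).congr_deriv (by ring))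
    (fun t ht ↦ by
      rw [neg_neg, norm_mul, norm_of_nonneg (gaussianPDFReal_nonneg 0 1 t)]
      exact mul_le_mul_of_nonneg_left (hr t ht) (gaussianPDFReal_nonneg 0 1 t))
    hu0 hB0
  rw [Pi.mul_apply, Pi.mul_apply, norm_mul, norm_of_nonneg (gaussianPDFReal_nonneg 0 1 w)]
    at hweighted
  exact le_of_mul_le_mul_left hweighted (gaussianPDFReal_pos 0 1 w one_ne_zero)

lemma abs_le_of_hasDerivAt_of_abs_le_linear {u r : ℝ → ℝ} {L w : ℝ} (hL : 0 ≤ L) (hw : 0 ≤ w)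
    (hu : ∀ t, HasDerivAt u (t * u t + r t) t) (hr : ∀ t ≥ 0, |r t| ≤ L * (t + 1))
    (hu0 : Tendsto (fun t ↦ gaussianPDFReal 0 1 t * u t) atTop (𝓝 0)) :
    |u w| ≤ 7 / 3 * L := by
  -- `4 / 3` is the least `c` making `L * (1 + c / (1 + t))` a supersolution: tight at `t = 1`.
  let B (t : ℝ) : ℝ := L * (1 + 4 / (3 * (1 + t)))
  have hB (t : ℝ) (ht : 0 ≤ t) : HasDerivAt B (-(L * (4 / (3 * (1 + t) ^ 2)))) t := by
    have hne : 1 + t ≠ 0 := by positivity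
    have h := (((((hasDerivAt_id t).const_add 1).const_mul 3).inv
      (by simpa using hne)).const_mul 4).const_add 1 |>.const_mul L
    refine h.congr_deriv ?_
    simp only [id]
    field_simp
  have hsuper (t : ℝ) (ht : 0 ≤ t) :
      t + 1 ≤ t * (1 + 4 / (3 * (1 + t))) + 4 / (3 * (1 + t) ^ 2) := by
    have hne : 1 + t ≠ 0 := by positivity
    have : t * (1 + 4 / (3 * (1 + t))) + 4 / (3 * (1 + t) ^ 2) - (t + 1)
        = (t - 1) ^ 2 / (3 * (1 + t) ^ 2) := by
      field_simp
      ring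
    have : 0 ≤ (t - 1) ^ 2 / (3 * (1 + t) ^ 2) := by positivity
    linarith
  have hB0 : Tendsto (fun t ↦ gaussianPDFReal 0 1 t * B t) atTop (𝓝 0) := by
    have hinv : Tendsto (fun t : ℝ ↦ 4 / (3 * (1 + t))) atTop (𝓝 0) :=
      tendsto_const_nhds.div_atTop
        ((tendsto_atTop_add_const_left _ 1 tendsto_id).const_mul_atTop (by norm_num))
    simpa [B] using (tendsto_pow_mul_gaussianPDFReal_atTop 0).mul ((hinv.const_add 1).const_mul L)
  calc |u w|
      ≤ B w := abs_le_of_hasDerivAt_mul_self_add (fun t _ ↦ hu t)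
        (fun t ht ↦ hB t (hw.trans ht))
        (fun t ht ↦ (hr t (hw.trans ht)).trans <| by
          linarith [mul_le_mul_of_nonneg_left (hsuper t (hw.trans ht)) hL]) hu0 hB0
    _ ≤ 7 / 3 * L := by
      have : 4 / (3 * (1 + w)) ≤ 4 / 3 := by gcongr; linarith
      linarith [mul_le_mul_of_nonneg_left this hL]

lemma mul_abs_le_of_hasDerivAt_of_abs_le {u r : ℝ → ℝ} {R w : ℝ} (hw : 0 ≤ w)
    (hu : ∀ t, HasDerivAt u (t * u t + r t) t) (hr : ∀ t, |r t| ≤ R)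
    (hu0 : Tendsto (fun t ↦ gaussianPDFReal 0 1 t * u t) atTop (𝓝 0)) :
    w * |u w| ≤ R := by
  have hR : 0 ≤ R := (abs_nonneg _).trans (hr 0)
  obtain rfl | hw := hw.eq_or_lt
  · simpa using hR
  have hB (t : ℝ) (ht : w ≤ t) : HasDerivAt (fun s ↦ R / s) (-(R / t ^ 2)) t := by
    simpa [div_eq_mul_inv] using (hasDerivAt_inv (hw.trans_le ht).ne').const_mul R
  have hB0 : Tendsto (fun t ↦ gaussianPDFReal 0 1 t * (R / t)) atTop (𝓝 0) := by
    simpa using (tendsto_pow_mul_gaussianPDFReal_atTop 0).mul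
      (tendsto_const_nhds (x := R).div_atTop tendsto_id)
  have := abs_le_of_hasDerivAt_mul_self_add (fun t _ ↦ hu t) hB (fun t ht ↦ (hr t).trans <| by
    have : 0 ≤ R / t ^ 2 := by positivity
    rw [mul_div_cancel₀ _ (hw.trans_le ht).ne']
    linarith) hu0 hB0
  rwa [le_div_iff₀' hw] at this

/-- The test function `g` recentred at its standard Gaussian mean: the right-hand side of the
Stein equation `f' w - w * f w = gaussianCentered g w`. -/
noncomputable def gaussianCentered (g : ℝ → ℝ) (t : ℝ) : ℝ :=
  g t - ∫ s, g s ∂gaussianReal 0 1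

/-- The solution `f` of the Stein equation `f' w - w * f w = gaussianCentered g w`, given by the
integrating factor `gaussianPDFReal 0 1`. -/
noncomputable def steinSolution (g : ℝ → ℝ) (w : ℝ) : ℝ :=
  (gaussianPDFReal 0 1 w)⁻¹ * ∫ t in Iic w, gaussianCentered g t ∂gaussianReal 0 1

variable {g : ℝ → ℝ} {L : ℝ≥0}

lemma lipschitzWith_gaussianCentered (hg : LipschitzWith L g) :
    LipschitzWith L (gaussianCentered g) := by
  simpa [gaussianCentered, sub_eq_add_neg] using!
    hg.add (LipschitzWith.const (-∫ s, g s ∂gaussianReal 0 1))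

lemma integrable_gaussianCentered (hg : LipschitzWith L g) :
    Integrable (gaussianCentered g) (gaussianReal 0 1) :=
  integrable_gaussianReal_of_lipschitzWith (lipschitzWith_gaussianCentered hg) 0 1

lemma integral_gaussianCentered (hg : LipschitzWith L g) :
    ∫ t, gaussianCentered g t ∂gaussianReal 0 1 = 0 := by
  simp [gaussianCentered, integral_sub (integrable_gaussianReal_of_lipschitzWith hg 0 1)
    (integrable_const _)]

lemma abs_gaussianCentered_le (hg : LipschitzWith L g) (t : ℝ) :
    |gaussianCentered g t| ≤ L * (|t| + 1) := by
  have hint := integrable_gaussianReal_of_lipschitzWith hg 0 1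
  have habs : Integrable (fun s : ℝ ↦ |s|) (gaussianReal 0 1) :=
    ((memLp_id_gaussianReal 1).integrable le_rfl).abs
  calc |gaussianCentered g t|
      = |∫ s, (g t - g s) ∂gaussianReal 0 1| := by
        simp [gaussianCentered, integral_sub (integrable_const _) hint]
    _ ≤ ∫ s, L * (|t| + |s|) ∂gaussianReal 0 1 :=
        norm_integral_le_of_norm_le (((integrable_const _).add habs).const_mul _)
          (ae_of_all _ fun s ↦ (hg.norm_sub_le t s).trans (by gcongr; exact abs_sub t s))
    _ ≤ L * (|t| + 1) := by
        rw [integral_const_mul, integral_add (integrable_const _) habs]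
        simp only [integral_const, probReal_univ, one_smul]
        gcongr
        exact integral_abs_gaussianReal_le_one

lemma gaussianPDFReal_mul_steinSolution (g : ℝ → ℝ) (w : ℝ) :
    gaussianPDFReal 0 1 w * steinSolution g w
      = ∫ t in Iic w, gaussianCentered g t ∂gaussianReal 0 1 :=
  mul_inv_cancel_left₀ (gaussianPDFReal_pos 0 1 w one_ne_zero).ne' _

lemma tendsto_gaussianPDFReal_mul_steinSolution_atTop (hg : LipschitzWith L g) :
    Tendsto (fun w ↦ gaussianPDFReal 0 1 w * steinSolution g w) atTop (𝓝 0) := by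
  simp only [gaussianPDFReal_mul_steinSolution]
  simpa only [integral_gaussianCentered hg] using!
    (aecover_Iic tendsto_id).integral_tendsto_of_countably_generated
      (integrable_gaussianCentered hg)

lemma steinSolution_comp_neg (hg : LipschitzWith L g) (w : ℝ) :
    steinSolution (fun t ↦ g (-t)) w = -steinSolution g (-w) := by
  have hneg : MeasurePreserving (MeasurableEquiv.neg ℝ) (gaussianReal 0 1) (gaussianReal 0 1) :=
    ⟨measurable_neg, by simpa using! gaussianReal_map_neg (μ := 0) (v := 1)⟩
  have hcentered : gaussianCentered (fun t ↦ g (-t)) = fun t ↦ gaussianCentered g (-t) := by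
    funext t
    simpa [gaussianCentered] using! hneg.integral_comp' g
  have := nullSingletonClass_gaussianReal (μ := 0) (one_ne_zero : (1 : ℝ≥0) ≠ 0)
  have htail : ∫ t in Iic w, gaussianCentered g (-t) ∂gaussianReal 0 1
      = ∫ t in Ioi (-w), gaussianCentered g t ∂gaussianReal 0 1 := by
    rw [← integral_Ici_eq_integral_Ioi]
    simpa using! hneg.setIntegral_preimage_emb (MeasurableEquiv.neg ℝ).measurableEmbedding
      (gaussianCentered g) (Ici (-w))
  have hsplit := integral_add_compl (measurableSet_Iic (a := -w)) (integrable_gaussianCentered hg)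
  rw [compl_Iic, integral_gaussianCentered hg] at hsplit
  have heven : gaussianPDFReal 0 1 (-w) = gaussianPDFReal 0 1 w := by simp [gaussianPDFReal]
  rw [steinSolution, steinSolution, hcentered, htail, eq_neg_of_add_eq_zero_right hsplit, heven,
    mul_neg]

lemma hasDerivAt_steinSolution (hg : LipschitzWith L g) (w : ℝ) :
    HasDerivAt (steinSolution g) (w * steinSolution g w + gaussianCentered g w) w := by
  have hpos := gaussianPDFReal_pos 0 1 w one_ne_zero
  have h := ((hasDerivAt_gaussianPDFReal 0 1 w).inv hpos.ne').mul
    (hasDerivAt_setIntegral_Iic_gaussianReal one_ne_zero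
      (lipschitzWith_gaussianCentered hg).continuous (integrable_gaussianCentered hg) w)
  refine h.congr_deriv ?_
  rw [← gaussianPDFReal_mul_steinSolution]
  simp only [sub_zero, NNReal.coe_one, div_one, Pi.inv_apply, smul_eq_mul]
  field_simp

lemma deriv_steinSolution (hg : LipschitzWith L g) :
    deriv (steinSolution g) = fun w ↦ w * steinSolution g w + gaussianCentered g w :=
  funext fun w ↦ (hasDerivAt_steinSolution hg w).deriv

lemma abs_steinSolution_le (hg : LipschitzWith L g) (w : ℝ) :
    |steinSolution g w| ≤ 7 / 3 * L := by
  wlog hw : 0 ≤ w generalizing g w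
  · have hneg := this (g := fun t ↦ g (-t)) (by simpa using! hg.comp (LipschitzWith.id.neg)) (-w)
      (by linarith)
    rwa [steinSolution_comp_neg hg, neg_neg, abs_neg] at hneg
  refine abs_le_of_hasDerivAt_of_abs_le_linear L.2 hw (hasDerivAt_steinSolution hg) (fun t ht ↦ ?_)
    (tendsto_gaussianPDFReal_mul_steinSolution_atTop hg)
  simpa only [abs_of_nonneg ht] using abs_gaussianCentered_le hg t

lemma hasDerivAt_deriv_steinSolution (hg : LipschitzWith L g) (hd : Differentiable ℝ g) (w : ℝ) :
    HasDerivAt (deriv (steinSolution g))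
      (w * deriv (steinSolution g) w + (steinSolution g w + deriv g w)) w := by
  have h := ((hasDerivAt_id w).mul (hasDerivAt_steinSolution hg w)).add
    ((hd w).hasDerivAt.sub_const (∫ s, g s ∂gaussianReal 0 1))
  rw [deriv_steinSolution hg]
  exact h.congr_deriv (by simp only [id]; ring)

lemma abs_steinSolution_add_deriv_le (hg : LipschitzWith L g) (w : ℝ) :
    |steinSolution g w + deriv g w| ≤ 10 / 3 * L := by
  have hsol := abs_steinSolution_le hg w
  have hderiv : |deriv g w| ≤ L := norm_deriv_le_of_lipschitz hg
  linarith [abs_add_le (steinSolution g w) (deriv g w)]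

lemma tendsto_gaussianPDFReal_mul_deriv_steinSolution_atTop (hg : LipschitzWith L g) :
    Tendsto (fun w ↦ gaussianPDFReal 0 1 w * deriv (steinSolution g) w) atTop (𝓝 0) := by
  have hdom : Tendsto (fun w ↦ 10 / 3 * L * (w ^ 1 * gaussianPDFReal 0 1 w)
      + L * (w ^ 0 * gaussianPDFReal 0 1 w)) atTop (𝓝 0) := by
    simpa only [mul_zero, add_zero] using
      ((tendsto_pow_mul_gaussianPDFReal_atTop 1).const_mul (10 / 3 * (L : ℝ))).add
        ((tendsto_pow_mul_gaussianPDFReal_atTop 0).const_mul (L : ℝ))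
  refine squeeze_zero_norm' ?_ hdom
  filter_upwards [eventually_ge_atTop 0] with w hw
  have hsol := mul_le_mul_of_nonneg_left (abs_steinSolution_le hg w) hw
  have hcentered := abs_gaussianCentered_le hg w
  have hderiv : |deriv (steinSolution g) w| ≤ 10 / 3 * L * w + L := by
    rw [deriv_steinSolution hg]
    refine (abs_add_le _ _).trans ?_
    rw [abs_mul]
    rw [abs_of_nonneg hw] at hcentered ⊢
    linarith
  rw [norm_mul, norm_of_nonneg (gaussianPDFReal_nonneg 0 1 w), norm_eq_abs]
  calc gaussianPDFReal 0 1 w * |deriv (steinSolution g) w|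
      ≤ gaussianPDFReal 0 1 w * (10 / 3 * L * w + L) :=
        mul_le_mul_of_nonneg_left hderiv (gaussianPDFReal_nonneg 0 1 w)
    _ = _ := by ring

lemma abs_mul_deriv_steinSolution_le (hg : LipschitzWith L g) (hd : Differentiable ℝ g) (w : ℝ) :
    |w * deriv (steinSolution g) w| ≤ 10 / 3 * L := by
  wlog hw : 0 ≤ w generalizing g w
  · have hneg := this (g := fun t ↦ g (-t)) (by simpa using! hg.comp (LipschitzWith.id.neg))
      (by fun_prop) (-w) (by linarith)
    have hsol : steinSolution (fun t ↦ g (-t)) = fun t ↦ -steinSolution g (-t) :=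
      funext (steinSolution_comp_neg hg)
    rw [hsol, deriv.fun_neg, deriv_comp_neg] at hneg
    simpa using hneg
  rw [abs_mul, abs_of_nonneg hw]
  exact mul_abs_le_of_hasDerivAt_of_abs_le hw (hasDerivAt_deriv_steinSolution hg hd)
    (abs_steinSolution_add_deriv_le hg) (tendsto_gaussianPDFReal_mul_deriv_steinSolution_atTop hg)

lemma lipschitzWith_deriv_steinSolution (hg : LipschitzWith L g) (hd : Differentiable ℝ g) :
    LipschitzWith (20 / 3 * L) (deriv (steinSolution g)) := by
  refine lipschitzWith_of_nnnorm_deriv_le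
    (fun w ↦ (hasDerivAt_deriv_steinSolution hg hd w).differentiableAt) fun w ↦ ?_
  rw [(hasDerivAt_deriv_steinSolution hg hd w).deriv, ← NNReal.coe_le_coe, coe_nnnorm, norm_eq_abs]
  refine (abs_add_le _ _).trans ?_
  push_cast
  linarith [abs_mul_deriv_steinSolution_le hg hd w, abs_steinSolution_add_deriv_le hg w]

end SteinSolution

section Trapezoid

open Set

open scoped NNReal

lemma norm_add_sub_add_le_of_lipschitzWith {E : Type*} [SeminormedAddCommGroup E] {φ : ℝ → E}
    {K : ℝ≥0} (hφ : LipschitzWith K φ) (m : ℝ) {u h : ℝ} (huh : u ≤ h) :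
    ‖φ (m + u) + φ (m - u) - (φ (m + h) + φ (m - h))‖ ≤ K * (2 * (h - u)) := by
  have hright : ‖φ (m + u) - φ (m + h)‖ ≤ K * (h - u) := by
    refine (hφ.norm_sub_le _ _).trans_eq ?_
    rw [add_sub_add_left_eq_sub, norm_sub_rev, norm_of_nonneg (sub_nonneg.2 huh)]
  have hleft : ‖φ (m - u) - φ (m - h)‖ ≤ K * (h - u) := by
    refine (hφ.norm_sub_le _ _).trans_eq ?_
    rw [sub_sub_sub_cancel_left, norm_of_nonneg (sub_nonneg.2 huh)]
  rw [add_sub_add_comm]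
  linarith [norm_add_le (φ (m + u) - φ (m + h)) (φ (m - u) - φ (m - h))]

lemma norm_sub_sub_smul_deriv_add_deriv_le {E : Type*} [NormedAddCommGroup E] [NormedSpace ℝ E]
    {f : ℝ → E} {K : ℝ≥0} (hf : Differentiable ℝ f) (hK : LipschitzWith K (deriv f))
    (m h : ℝ) :
    ‖f (m + h) - f (m - h) - h • (deriv f (m + h) + deriv f (m - h))‖ ≤ K * h ^ 2 := by
  wlog hh : 0 ≤ h generalizing h
  · convert! this (-h) (by linarith) using 1
    · rw [sub_neg_eq_add, ← sub_eq_add_neg, ← norm_neg, neg_smul, add_comm (deriv f _)]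
      congr 1
      abel
    · rw [neg_sq]
  set c := deriv f (m + h) + deriv f (m - h)
  have hgap (u : ℝ) : HasDerivAt (fun u ↦ f (m + u) - f (m - u) - u • c)
      (deriv f (m + u) + deriv f (m - u) - c) u := by
    have hadd := (hf (m + u)).hasDerivAt.comp_const_add m u
    have hsub := (hf (m - u)).hasDerivAt.comp_const_sub m u
    refine ((hadd.sub hsub).sub ((hasDerivAt_id u).smul_const c)).congr_deriv ?_
    rw [one_smul, sub_neg_eq_add]
  have hbound (u : ℝ) : HasDerivAt (fun u ↦ K * (2 * h * u - u ^ 2)) (K * (2 * (h - u))) u := by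
    have := (((hasDerivAt_id u).const_mul (2 * h)).sub (hasDerivAt_pow 2 u)).const_mul (K : ℝ)
    refine this.congr_deriv ?_
    push_cast
    ring
  have := image_norm_le_of_norm_deriv_right_le_deriv_boundary (a := 0) (b := h)
    (fun u _ ↦ (hgap u).continuousAt.continuousWithinAt)
    (fun u _ ↦ (hgap u).hasDerivWithinAt) (by simp) hbound
    (fun u hu ↦ norm_add_sub_add_le_of_lipschitzWith hK m hu.2.le) (right_mem_Icc.2 hh)
  exact this.trans_eq (by ring)

end Trapezoid

instance isProbabilityMeasure_rademacher : IsProbabilityMeasure rademacher :=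
  ⟨by simp [rademacher, ENNReal.inv_two_add_inv_two]⟩

/-- The law of the diagonal of a random sign diagonal matrix: independent Rademacher
coordinates indexed by `ι`. -/
noncomputable abbrev randomSigns (ι : Type*) [Fintype ι] : Measure (ι → ℝ) :=
  Measure.pi fun _ : ι ↦ rademacher

section RandomSigns

open Set

open scoped NNReal Matrix

variable {ι : Type*} [Fintype ι]

lemma measurePreserving_neg_rademacher :
    MeasurePreserving (fun t : ℝ ↦ -t) rademacher rademacher := by
  refine ⟨measurable_neg, ?_⟩
  unfold rademacher
  rw [Measure.map_add _ _ measurable_neg, Measure.map_smul, Measure.map_smul,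
    Measure.map_dirac' measurable_neg, Measure.map_dirac' measurable_neg, neg_neg, add_comm]

lemma ae_sq_eq_one_rademacher : ∀ᵐ t ∂rademacher, t ^ 2 = 1 := by
  have hmeas : MeasurableSet {t : ℝ | t ^ 2 = 1} :=
    measurableSet_eq_fun (by fun_prop) (by fun_prop)
  refine ae_add_measure_iff.2 ⟨?_, ?_⟩ <;>
  · refine Measure.ae_smul_measure ((ae_dirac_iff hmeas).2 ?_) _
    norm_num

lemma ae_sq_eq_one_randomSigns : ∀ᵐ e ∂randomSigns ι, ∀ i, e i ^ 2 = 1 :=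
  ae_all_iff.2 fun i ↦ (measurePreserving_eval (fun _ : ι ↦ rademacher) i).quasiMeasurePreserving.ae
    ae_sq_eq_one_rademacher

lemma ae_mem_Icc_randomSigns : ∀ᵐ e ∂randomSigns ι, e ∈ Icc (-1) 1 := by
  filter_upwards [ae_sq_eq_one_randomSigns] with e he
  have habs (i : ι) : |e i| ≤ 1 := (sq_le_one_iff_abs_le_one _).1 (he i).le
  exact ⟨fun i ↦ (abs_le.1 (habs i)).1, fun i ↦ (abs_le.1 (habs i)).2⟩

lemma integrable_of_continuous_of_ae_mem_isCompact {X E : Type*} [TopologicalSpace X] [T2Space X]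
    [MeasurableSpace X] [OpensMeasurableSpace X] [NormedAddCommGroup E]
    [SecondCountableTopologyEither X E] {μ : Measure X} [IsFiniteMeasureOnCompacts μ] {φ : X → E}
    (hφ : Continuous φ) {K : Set X} (hK : IsCompact K) (hmem : ∀ᵐ t ∂μ, t ∈ K) :
    Integrable φ μ := by
  rw [← Measure.restrict_eq_self_of_ae_mem hmem]
  exact hφ.continuousOn.integrableOn_compact hK

lemma integrable_randomSigns {E : Type*} [NormedAddCommGroup E] {φ : (ι → ℝ) → E}
    (hφ : Continuous φ) : Integrable φ (randomSigns ι) :=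
  integrable_of_continuous_of_ae_mem_isCompact hφ isCompact_Icc ae_mem_Icc_randomSigns

lemma measurePreserving_update_neg_randomSigns [DecidableEq ι] (j : ι) :
    MeasurePreserving (fun e ↦ Function.update e j (-e j)) (randomSigns ι) (randomSigns ι) := by
  have hflip (i : ι) :
      MeasurePreserving (fun t ↦ if i = j then -t else t) rademacher rademacher := by
    split_ifs
    · exact measurePreserving_neg_rademacher
    · exact MeasurePreserving.id rademacher
  convert! measurePreserving_pi (fun _ : ι ↦ rademacher) (fun _ : ι ↦ rademacher) hflip using 1
  funext e i
  obtain rfl | hij := eq_or_ne i j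
  · simp
  · simp [hij]

lemma integral_comp_update_neg_randomSigns {E : Type*} [NormedAddCommGroup E] [NormedSpace ℝ E]
    [DecidableEq ι] (j : ι) {φ : (ι → ℝ) → E} (hφ : Continuous φ) :
    ∫ e, φ (Function.update e j (-e j)) ∂randomSigns ι = ∫ e, φ e ∂randomSigns ι := by
  have hflip := measurePreserving_update_neg_randomSigns j
  rw [← integral_map hflip.aemeasurable hφ.aestronglyMeasurable, hflip.map_eq]

lemma update_neg_dotProduct [DecidableEq ι] {R : Type*} [CommRing R] (e a : ι → R) (j : ι) :
    Function.update e j (-e j) ⬝ᵥ a = e ⬝ᵥ a - 2 * (e j * a j) := by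
  have : Function.update e j (-e j) = e - Pi.single j (2 * e j) := by
    funext i
    obtain rfl | hij := eq_or_ne i j
    · simp [two_mul]
    · simp [hij]
  rw [this, sub_dotProduct, single_dotProduct, mul_assoc]

variable (a : ι → ℝ) {φ : ℝ → ℝ}

lemma integral_dotProduct_eq_integral_half_add (hφ : Continuous φ) (j : ι) :
    ∫ e, φ (e ⬝ᵥ a) ∂randomSigns ι
      = ∫ e, (φ (e ⬝ᵥ a) + φ (e ⬝ᵥ a - 2 * (e j * a j))) / 2 ∂randomSigns ι := by
  classical
  have hflip := integral_comp_update_neg_randomSigns j (φ := fun e ↦ φ (e ⬝ᵥ a)) (by fun_prop)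
  simp only [update_neg_dotProduct] at hflip
  rw [integral_div, integral_add (integrable_randomSigns (by fun_prop))
    (integrable_randomSigns (by fun_prop)), hflip]
  ring

lemma integral_coord_mul_dotProduct_eq_integral_half_sub (hφ : Continuous φ) (j : ι) :
    ∫ e, e j * a j * φ (e ⬝ᵥ a) ∂randomSigns ι
      = ∫ e, e j * a j * (φ (e ⬝ᵥ a) - φ (e ⬝ᵥ a - 2 * (e j * a j))) / 2 ∂randomSigns ι := by
  classical
  have hflip := integral_comp_update_neg_randomSigns j
    (φ := fun e ↦ e j * a j * φ (e ⬝ᵥ a)) (by fun_prop)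
  simp only [update_neg_dotProduct, Function.update_self, neg_mul, integral_neg] at hflip
  simp only [mul_sub]
  rw [integral_div, integral_sub (integrable_randomSigns (by fun_prop))
    (integrable_randomSigns (by fun_prop)), ← hflip]
  ring

lemma integral_dotProduct_mul (hφ : Continuous φ) :
    ∫ e, e ⬝ᵥ a * φ (e ⬝ᵥ a) ∂randomSigns ι
      = ∑ j, ∫ e, e j * a j * (φ (e ⬝ᵥ a) - φ (e ⬝ᵥ a - 2 * (e j * a j))) / 2
          ∂randomSigns ι := by
  simp only [← integral_coord_mul_dotProduct_eq_integral_half_sub a hφ]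
  rw [← integral_finsetSum _ fun j _ ↦ integrable_randomSigns (by fun_prop)]
  simp only [dotProduct, Finset.sum_mul]

lemma integral_dotProduct_sq_randomSigns :
    ∫ e, (e ⬝ᵥ a) ^ 2 ∂randomSigns ι = ∑ j, a j ^ 2 := by
  simp only [sq (_ ⬝ᵥ a)]
  rw [integral_dotProduct_mul a continuous_id']
  refine Finset.sum_congr rfl fun j _ ↦ ?_
  have : ∀ᵐ e ∂randomSigns ι,
      e j * a j * (e ⬝ᵥ a - (e ⬝ᵥ a - 2 * (e j * a j))) / 2 = a j ^ 2 := by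
    filter_upwards [ae_sq_eq_one_randomSigns] with e he
    linear_combination a j ^ 2 * he j
  rw [integral_congr_ae this]
  simp

lemma integral_dotProduct_pow_four_randomSigns_le :
    ∫ e, (e ⬝ᵥ a) ^ 4 ∂randomSigns ι ≤ 3 * (∑ j, a j ^ 2) ^ 2 := by
  calc ∫ e, (e ⬝ᵥ a) ^ 4 ∂randomSigns ι
      = ∑ j, ∫ e, e j * a j * ((e ⬝ᵥ a) ^ 3 - (e ⬝ᵥ a - 2 * (e j * a j)) ^ 3) / 2
          ∂randomSigns ι := by
        simp only [pow_succ' _ 3]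
        exact integral_dotProduct_mul a (continuous_pow 3)
    _ ≤ ∑ j, 3 * a j ^ 2 * ∫ e, (e ⬝ᵥ a) ^ 2 ∂randomSigns ι := by
        refine Finset.sum_le_sum fun j _ ↦ ?_
        rw [integral_dotProduct_eq_integral_half_add a (continuous_pow 2) j, ← integral_const_mul]
        refine integral_mono_ae (integrable_randomSigns (by fun_prop))
          (integrable_randomSigns (by fun_prop)) ?_
        filter_upwards [ae_sq_eq_one_randomSigns] with e he
        rw [show a j ^ 2 = (e j * a j) ^ 2 by rw [mul_pow, he, one_mul]]
        nlinarith [sq_nonneg ((e j * a j) ^ 2)]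
    _ = 3 * (∑ j, a j ^ 2) ^ 2 := by
        rw [integral_dotProduct_sq_randomSigns, ← Finset.sum_mul, ← Finset.mul_sum]
        ring

lemma integral_abs_dotProduct_pow_three_randomSigns_le :
    ∫ e, |e ⬝ᵥ a| ^ 3 ∂randomSigns ι ≤ √3 * √(∑ j, a j ^ 2) ^ 3 := by
  have hL2 {φ : (ι → ℝ) → ℝ} (hφ : Continuous φ) : MemLp φ (ENNReal.ofReal 2) (randomSigns ι) := by
    rw [ENNReal.ofReal_ofNat, memLp_two_iff_integrable_sq hφ.aestronglyMeasurable]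
    exact integrable_randomSigns (by fun_prop)
  have hcauchy := integral_mul_le_Lp_mul_Lq_of_nonneg HolderConjugate.two_two
    (μ := randomSigns ι) (f := fun e ↦ |e ⬝ᵥ a|) (g := fun e ↦ (e ⬝ᵥ a) ^ 2)
    (ae_of_all _ fun e ↦ abs_nonneg _) (ae_of_all _ fun e ↦ sq_nonneg _)
    (hL2 (by fun_prop)) (hL2 (by fun_prop))
  simp only [rpow_two, sq_abs, ← sqrt_eq_rpow, ← pow_mul, Nat.reduceMul] at hcauchy
  set σ := √(∑ j, a j ^ 2)
  have hσ2 : ∑ j, a j ^ 2 = σ ^ 2 := (sq_sqrt (Finset.sum_nonneg fun j _ ↦ sq_nonneg _)).symm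
  calc ∫ e, |e ⬝ᵥ a| ^ 3 ∂randomSigns ι
      = ∫ e, |e ⬝ᵥ a| * (e ⬝ᵥ a) ^ 2 ∂randomSigns ι := by simp only [pow_succ' _ 2, sq_abs]
    _ ≤ √(∫ e, (e ⬝ᵥ a) ^ 2 ∂randomSigns ι) * √(∫ e, (e ⬝ᵥ a) ^ 4 ∂randomSigns ι) := hcauchy
    _ ≤ σ * √(3 * (σ ^ 2) ^ 2) := by
        rw [integral_dotProduct_sq_randomSigns, ← hσ2]
        gcongr
        exact integral_dotProduct_pow_four_randomSigns_le a
    _ = √3 * σ ^ 3 := by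
        rw [sqrt_mul (by norm_num), sqrt_sq (sq_nonneg σ)]
        ring

end RandomSigns

section RademacherCLT

open scoped NNReal Matrix

variable {ι : Type*} [Fintype ι] {a : ι → ℝ}

lemma integral_sum_sq_mul_sub_dotProduct_mul (a : ι → ℝ) {φ ψ : ℝ → ℝ} (hφ : Continuous φ)
    (hψ : Continuous ψ) :
    ∫ e, ((∑ j, a j ^ 2) * φ (e ⬝ᵥ a) - e ⬝ᵥ a * ψ (e ⬝ᵥ a)) ∂randomSigns ι
      = ∑ j, ∫ e, (a j ^ 2 * ((φ (e ⬝ᵥ a) + φ (e ⬝ᵥ a - 2 * (e j * a j))) / 2)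
          - e j * a j * (ψ (e ⬝ᵥ a) - ψ (e ⬝ᵥ a - 2 * (e j * a j))) / 2) ∂randomSigns ι := by
  have hsplit (j : ι) := integral_sub (μ := randomSigns ι)
    (integrable_randomSigns (φ := fun e ↦
      a j ^ 2 * ((φ (e ⬝ᵥ a) + φ (e ⬝ᵥ a - 2 * (e j * a j))) / 2)) (by fun_prop))
    (integrable_randomSigns (φ := fun e ↦
      e j * a j * (ψ (e ⬝ᵥ a) - ψ (e ⬝ᵥ a - 2 * (e j * a j))) / 2) (by fun_prop))
  rw [integral_sub (integrable_randomSigns (by fun_prop)) (integrable_randomSigns (by fun_prop))]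
  simp only [hsplit, integral_const_mul, ← integral_dotProduct_eq_integral_half_add a hφ,
    Finset.sum_sub_distrib, ← Finset.sum_mul, ← integral_dotProduct_mul a hψ]

lemma abs_integral_sum_sq_mul_deriv_sub_dotProduct_mul_le (a : ι → ℝ) {f : ℝ → ℝ} {K : ℝ≥0}
    (hf : Differentiable ℝ f) (hK : LipschitzWith K (deriv f)) :
    |∫ e, ((∑ j, a j ^ 2) * deriv f (e ⬝ᵥ a) - e ⬝ᵥ a * f (e ⬝ᵥ a)) ∂randomSigns ι|
      ≤ K / 2 * ∑ j, |a j| ^ 3 := by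
  rw [integral_sum_sq_mul_sub_dotProduct_mul a hK.continuous hf.continuous, Finset.mul_sum]
  refine (Finset.abs_sum_le_sum_abs _ _).trans (Finset.sum_le_sum fun j _ ↦ ?_)
  rw [← norm_eq_abs]
  refine (norm_integral_le_of_norm_le_const ?_).trans_eq
    (by rw [probReal_univ, mul_one] : K / 2 * |a j| ^ 3 * _ = _)
  filter_upwards [ae_sq_eq_one_randomSigns] with e he
  have htrap := norm_sub_sub_smul_deriv_add_deriv_le hf hK (e ⬝ᵥ a - e j * a j) (e j * a j)
  rw [sub_add_cancel, sub_sub _ (e j * a j) (e j * a j), ← two_mul, smul_eq_mul,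
    norm_eq_abs] at htrap
  have hsq : a j ^ 2 = (e j * a j) ^ 2 := by rw [mul_pow, he, one_mul]
  rw [hsq, ← (sq_eq_sq_iff_abs_eq_abs _ _).1 hsq.symm, norm_eq_abs]
  generalize e ⬝ᵥ a = S, e j * a j = h at htrap ⊢
  calc |h ^ 2 * ((deriv f S + deriv f (S - 2 * h)) / 2) - h * (f S - f (S - 2 * h)) / 2|
      = |h| / 2 * |f S - f (S - 2 * h) - h * (deriv f S + deriv f (S - 2 * h))| := by
        rw [← abs_two, ← abs_div, ← abs_mul, ← abs_neg]
        congr 1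
        ring
    _ ≤ |h| / 2 * (K * h ^ 2) := by gcongr
    _ = K / 2 * |h| ^ 3 := by
        rw [← sq_abs h]
        ring

lemma abs_integral_dotProduct_sub_integral_gaussianReal_le_of_sum_sq_eq_one
    (ha : ∑ j, a j ^ 2 = 1) {g : ℝ → ℝ} {L : ℝ≥0}
    (hd : Differentiable ℝ g) (hg : LipschitzWith L g) :
    |∫ e, g (e ⬝ᵥ a) ∂randomSigns ι - ∫ t, g t ∂gaussianReal 0 1|
      ≤ 10 / 3 * L * ∑ j, |a j| ^ 3 := by
  have hcg := hg.continuous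
  have hstein : ∫ e, g (e ⬝ᵥ a) ∂randomSigns ι - ∫ t, g t ∂gaussianReal 0 1
      = ∫ e, ((∑ j, a j ^ 2) * deriv (steinSolution g) (e ⬝ᵥ a)
          - e ⬝ᵥ a * steinSolution g (e ⬝ᵥ a)) ∂randomSigns ι := by
    simp only [ha, one_mul, deriv_steinSolution hg, add_sub_cancel_left, gaussianCentered]
    rw [integral_sub (integrable_randomSigns (by fun_prop)) (integrable_const _)]
    simp
  rw [hstein]
  refine (abs_integral_sum_sq_mul_deriv_sub_dotProduct_mul_le a
    (fun w ↦ (hasDerivAt_steinSolution hg w).differentiableAt)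
    (lipschitzWith_deriv_steinSolution hg hd)).trans_eq ?_
  push_cast
  ring

lemma abs_integral_dotProduct_sub_integral_gaussianReal_le {σ : ℝ} (hσ : 0 < σ)
    (ha : ∑ j, a j ^ 2 = σ ^ 2) {g : ℝ → ℝ} {L : ℝ≥0}
    (hd : Differentiable ℝ g) (hg : LipschitzWith L g) :
    |∫ e, g (e ⬝ᵥ a) ∂randomSigns ι - ∫ t, g (σ * t) ∂gaussianReal 0 1|
      ≤ 10 / 3 * L * (∑ j, |a j| ^ 3) / σ ^ 2 := by
  have hunit : ∑ j, (σ⁻¹ • a) j ^ 2 = 1 := by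
    simp only [Pi.smul_apply, smul_eq_mul, mul_pow, ← Finset.mul_sum, ha]
    field_simp
  have hscaled : LipschitzWith (L * ‖σ‖₊) fun t ↦ g (σ * t) := by
    simpa using! hg.comp (lipschitzWith_smul σ)
  have h := abs_integral_dotProduct_sub_integral_gaussianReal_le_of_sum_sq_eq_one hunit
    (by fun_prop) hscaled
  simp only [dotProduct_smul, smul_eq_mul, mul_inv_cancel_left₀ hσ.ne', Pi.smul_apply, abs_mul,
    abs_inv, abs_of_pos hσ, mul_pow, ← Finset.mul_sum, NNReal.coe_mul, coe_nnnorm,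
    norm_of_nonneg hσ.le] at h
  refine h.trans_eq ?_
  field_simp

end RademacherCLT

section Hadamard

open scoped Matrix

lemma bijective_testBit (n : ℕ) :
    Function.Bijective fun (j : Fin (2 ^ n)) (k : Fin n) ↦ (j : ℕ).testBit k := by
  refine (Fintype.bijective_iff_injective_and_card _).2 ⟨fun i j hij ↦ ?_, by simp⟩
  refine Fin.ext (Nat.eq_of_testBit_eq fun k ↦ ?_)
  obtain hk | hk := lt_or_ge k n
  · exact congrFun hij ⟨k, hk⟩
  · have hpow := Nat.pow_le_pow_right two_pos hk
    rw [Nat.testBit_lt_two_pow (i.2.trans_le hpow), Nat.testBit_lt_two_pow (j.2.trans_le hpow)]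

lemma sqrt_smul_hadamardMatrix_apply (n : ℕ) (i j : Fin (2 ^ n)) :
    (√(2 ^ n) • hadamardMatrix n) i j
      = ∏ k : Fin n, if (i : ℕ).testBit k && (j : ℕ).testBit k then (-1 : ℝ) else 1 := by
  have hne : √((2 : ℝ) ^ n) ≠ 0 := by positivity
  rw [Matrix.smul_apply, hadamardMatrix, Matrix.of_apply, smul_eq_mul, mul_div_cancel₀ _ hne,
    ← Finset.prod_pow_eq_pow_sum]
  refine Finset.prod_congr rfl fun k _ ↦ ?_
  cases (i : ℕ).testBit k <;> cases (j : ℕ).testBit k <;> simp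

lemma abs_sqrt_smul_hadamardMatrix_apply (n : ℕ) (i j : Fin (2 ^ n)) :
    |(√(2 ^ n) • hadamardMatrix n) i j| = 1 := by
  rw [sqrt_smul_hadamardMatrix_apply, Finset.abs_prod]
  exact Finset.prod_eq_one fun k _ ↦ by split_ifs <;> simp

lemma sum_sqrt_smul_hadamardMatrix_mul (n : ℕ) (i j : Fin (2 ^ n)) :
    ∑ l, (√(2 ^ n) • hadamardMatrix n) i l * (√(2 ^ n) • hadamardMatrix n) j l
      = if i = j then 2 ^ n else 0 := by
  let c (k : Fin n) (b : Bool) : ℝ :=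
    (if (i : ℕ).testBit k && b then -1 else 1) * (if (j : ℕ).testBit k && b then -1 else 1)
  have hc (k : Fin n) : ∑ b, c k b = if (i : ℕ).testBit k = (j : ℕ).testBit k then 2 else 0 := by
    simp only [c]
    cases (i : ℕ).testBit k <;> cases (j : ℕ).testBit k <;> norm_num
  calc ∑ l, (√(2 ^ n) • hadamardMatrix n) i l * (√(2 ^ n) • hadamardMatrix n) j l
      = ∑ l : Fin (2 ^ n), ∏ k : Fin n, c k ((l : ℕ).testBit k) := by
        simp only [sqrt_smul_hadamardMatrix_apply, ← Finset.prod_mul_distrib, c]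
    _ = ∏ k, ∑ b, c k b := by
        rw [(bijective_testBit n).sum_comp fun b ↦ ∏ k, c k (b k), Fintype.prod_sum]
    _ = if i = j then 2 ^ n else 0 := by
        simp only [hc]
        split_ifs with hij
        · simp [hij]
        · obtain ⟨k, hk⟩ := Function.ne_iff.1 ((bijective_testBit n).injective.ne hij)
          exact Finset.prod_eq_zero (Finset.mem_univ k) (if_neg hk)

lemma isHadamard_sqrt_smul_hadamardMatrix (n : ℕ) :
    (√(2 ^ n) • hadamardMatrix n).IsHadamard := by
  refine .of_mul_conjTranspose (fun i j ↦ ?_) ?_ (.of_ne_zero (by simp))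
  · rw [Unitary.mem_iff]
    have hsq : (√(2 ^ n) • hadamardMatrix n) i j ^ 2 = 1 := by
      rw [← sq_abs, abs_sqrt_smul_hadamardMatrix_apply, one_pow]
    simp only [star_trivial, ← sq, hsq, and_self]
  · ext i j
    simpa [Matrix.mul_apply, Matrix.one_apply] using! sum_sqrt_smul_hadamardMatrix_mul n i j

variable {ι : Type*} [Fintype ι] [DecidableEq ι] {B : Matrix ι ι ℝ}

lemma abs_apply_of_isHadamard (hB : B.IsHadamard) (i j : ι) : |B i j| = 1 :=
  CStarRing.norm_of_mem_unitary (hB.apply_mem i j)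

lemma sum_sq_mulVec_of_isHadamard (hB : B.IsHadamard) (v : ι → ℝ) :
    ∑ j, (B *ᵥ v) j ^ 2 = Fintype.card ι * ∑ j, v j ^ 2 := by
  have hself (u : ι → ℝ) : ∑ j, u j ^ 2 = u ⬝ᵥ u := by simp only [dotProduct, sq]
  have hadj : Bᵀ * B = (Fintype.card ι : ℝ) • 1 := by
    simpa [Matrix.conjTranspose_eq_transpose_of_trivial] using hB.conjTranspose_mul
  rw [hself, hself, Matrix.dotProduct_mulVec, Matrix.vecMul_mulVec, hadj, Matrix.vecMul_smul]
  simp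

end Hadamard

section GaussianLinearForm

lemma integral_dotProduct_pi_gaussianReal {ι : Type*} [Fintype ι] (x : EuclideanSpace ℝ ι)
    {g : ℝ → ℝ} (hg : Continuous g) :
    ∫ v : ι → ℝ, g (v ⬝ᵥ x.ofLp) ∂(Measure.pi fun _ : ι ↦ gaussianReal 0 1)
      = ∫ t, g (‖x‖ * t) ∂gaussianReal 0 1 := by
  classical
  have hlaw : (stdGaussian (EuclideanSpace ℝ ι)).map (innerSL ℝ x)
      = (gaussianReal 0 1).map (‖x‖ * ·) := by
    rw [IsGaussian.map_eq_gaussianReal, integral_strongDual_stdGaussian,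
      variance_dual_stdGaussian, innerSL_apply_norm, gaussianReal_map_const_mul, mul_zero, mul_one]
    congr 1
    exact Real.toNNReal_of_nonneg (sq_nonneg _)
  rw [← integral_map (φ := (‖x‖ * ·)) (by fun_prop) hg.aestronglyMeasurable, ← hlaw,
    integral_map (by fun_prop) hg.aestronglyMeasurable, ← map_pi_eq_stdGaussian,
    integral_map (by fun_prop) (by fun_prop)]
  rfl

lemma integral_mulVec_apply_pi_gaussianReal {m ι : Type*} [Fintype m] [Fintype ι]
    (x : EuclideanSpace ℝ ι) {g : ℝ → ℝ} (hg : Continuous g) (i : m) :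
    ∫ G : m → ι → ℝ, g ((Matrix.of G).mulVec x i)
        ∂(Measure.pi fun _ : m ↦ Measure.pi fun _ : ι ↦ gaussianReal 0 1)
      = ∫ t, g (‖x‖ * t) ∂gaussianReal 0 1 := by
  rw [← integral_dotProduct_pi_gaussianReal x hg]
  exact integral_comp_eval (μ := fun _ : m ↦ Measure.pi fun _ : ι ↦ gaussianReal 0 1)
    (f := fun v ↦ g (v ⬝ᵥ x.ofLp)) (Continuous.aestronglyMeasurable (by fun_prop))

end GaussianLinearForm

section RandomizedHadamard

open scoped NNReal Matrix

variable {ι : Type*} [Fintype ι]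

lemma norm_sub_integral_prod_le_of_ae_le {X Y E : Type*} [MeasurableSpace X] [MeasurableSpace Y]
    [NormedAddCommGroup E] [NormedSpace ℝ E] [CompleteSpace E] {μ : Measure X} {ν : Measure Y}
    [SFinite μ] [IsProbabilityMeasure ν] {φ : X × Y → E} (hφ : Integrable φ (μ.prod ν)) {c : E}
    {b : Y → ℝ} (hb : Integrable b ν) (hle : ∀ᵐ y ∂ν, ‖c - ∫ x, φ (x, y) ∂μ‖ ≤ b y) :
    ‖c - ∫ p, φ p ∂μ.prod ν‖ ≤ ∫ y, b y ∂ν := by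
  have hmean : c - ∫ p, φ p ∂μ.prod ν = ∫ y, (c - ∫ x, φ (x, y) ∂μ) ∂ν := by
    rw [integral_prod_symm _ hφ, integral_sub (integrable_const _) hφ.integral_prod_right,
      integral_const, probReal_univ, one_smul]
  rw [hmean]
  exact norm_integral_le_of_norm_le hb hle

lemma integrable_randomSigns_prod {κ E : Type*} [Fintype κ] [NormedAddCommGroup E]
    {φ : (ι → ℝ) × (κ → ℝ) → E} (hφ : Continuous φ) :
    Integrable φ ((randomSigns ι).prod (randomSigns κ)) :=
  integrable_of_continuous_of_ae_mem_isCompact hφ (isCompact_Icc.prod isCompact_Icc)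
    ((Measure.quasiMeasurePreserving_fst.ae ae_mem_Icc_randomSigns).and
      (Measure.quasiMeasurePreserving_snd.ae ae_mem_Icc_randomSigns))

/-- The coefficient vector of one coordinate of `(√d)⁻¹ • (A * D₁ * B * D₂) *ᵥ x`, viewed as a
linear form in the diagonal of `D₁`: here `s` is the corresponding row of `A`, and `e` is the
diagonal of `D₂`. -/
noncomputable def signCoeff (B : Matrix ι ι ℝ) (s x e : ι → ℝ) : ι → ℝ :=
  (√(Fintype.card ι))⁻¹ • (s * B *ᵥ (e * x))

lemma smul_mul_diagonal_mulVec_apply [DecidableEq ι] (A B : Matrix ι ι ℝ) (x e₁ e₂ : ι → ℝ)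
    (i : ι) :
    (((√(Fintype.card ι))⁻¹ • (A * Matrix.diagonal e₁ * B * Matrix.diagonal e₂)) *ᵥ x) i
      = e₁ ⬝ᵥ signCoeff B (A i) x e₂ := by
  have hdiag (e v : ι → ℝ) : Matrix.diagonal e *ᵥ v = e * v :=
    funext (Matrix.mulVec_diagonal e v)
  simp only [Matrix.smul_mulVec, ← Matrix.mulVec_mulVec, hdiag, signCoeff, dotProduct_smul,
    Pi.smul_apply]
  congr 1
  exact Finset.sum_congr rfl fun j _ ↦ mul_left_comm _ _ _

variable {B : Matrix ι ι ℝ} {s : ι → ℝ}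

@[fun_prop]
lemma continuous_signCoeff (B : Matrix ι ι ℝ) (s x : ι → ℝ) : Continuous (signCoeff B s x) := by
  unfold signCoeff
  fun_prop

lemma abs_signCoeff (hs : ∀ j, |s j| = 1) (x e : ι → ℝ) (j : ι) :
    |signCoeff B s x e j| = (√(Fintype.card ι))⁻¹ * |e ⬝ᵥ (B j * x)| := by
  have hrow : (B *ᵥ (e * x)) j = e ⬝ᵥ (B j * x) :=
    Finset.sum_congr rfl fun k _ ↦ mul_left_comm _ _ _
  rw [signCoeff, Pi.smul_apply, Pi.mul_apply, hrow, smul_eq_mul, abs_mul, abs_mul, hs, one_mul,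
    abs_of_nonneg (by positivity)]

variable [DecidableEq ι] [Nonempty ι]

lemma sum_sq_signCoeff (hB : B.IsHadamard) (hs : ∀ j, |s j| = 1) (x : EuclideanSpace ℝ ι)
    {e : ι → ℝ} (he : ∀ j, e j ^ 2 = 1) :
    ∑ j, signCoeff B s x.ofLp e j ^ 2 = ‖x‖ ^ 2 := by
  have hs2 (j : ι) : s j ^ 2 = 1 := by rw [← sq_abs, hs, one_pow]
  simp only [signCoeff, Pi.smul_apply, Pi.mul_apply, smul_eq_mul, mul_pow, hs2, one_mul,
    ← Finset.mul_sum, sum_sq_mulVec_of_isHadamard hB, he, inv_pow, sq_sqrt (Nat.cast_nonneg' _)]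
  rw [inv_mul_cancel_left₀ (Nat.cast_ne_zero.2 Fintype.card_ne_zero),
    EuclideanSpace.real_norm_sq_eq]

lemma integral_sum_abs_signCoeff_pow_three_le (hB : B.IsHadamard) (hs : ∀ j, |s j| = 1)
    (x : EuclideanSpace ℝ ι) :
    ∫ e, ∑ j, |signCoeff B s x.ofLp e j| ^ 3 ∂randomSigns ι
      ≤ √3 * ‖x‖ ^ 3 / √(Fintype.card ι) := by
  have hrow (j : ι) : √(∑ k, (B j * x.ofLp) k ^ 2) = ‖x‖ := by
    have hB2 (k : ι) : B j k ^ 2 = 1 := by rw [← sq_abs, abs_apply_of_isHadamard hB, one_pow]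
    simp only [Pi.mul_apply, mul_pow, hB2, one_mul, ← EuclideanSpace.real_norm_sq_eq]
    exact sqrt_sq (norm_nonneg x)
  have hcard : (0 : ℝ) < Fintype.card ι := Nat.cast_pos.2 Fintype.card_pos
  calc ∫ e, ∑ j, |signCoeff B s x.ofLp e j| ^ 3 ∂randomSigns ι
      = ∑ j, (√(Fintype.card ι))⁻¹ ^ 3 * ∫ e, |e ⬝ᵥ (B j * x.ofLp)| ^ 3 ∂randomSigns ι := by
        simp only [abs_signCoeff hs, mul_pow]
        rw [integral_finsetSum _ fun j _ ↦ integrable_randomSigns (by fun_prop)]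
        simp only [integral_const_mul]
    _ ≤ ∑ _j : ι, (√(Fintype.card ι))⁻¹ ^ 3 * (√3 * ‖x‖ ^ 3) := by
        gcongr with j
        exact (integral_abs_dotProduct_pow_three_randomSigns_le _).trans_eq (by rw [hrow])
    _ = √3 * ‖x‖ ^ 3 / √(Fintype.card ι) := by
        rw [Finset.sum_const, Finset.card_univ, nsmul_eq_mul]
        nth_rw 1 [← sq_sqrt hcard.le]
        field_simp

lemma abs_integral_gaussianReal_sub_integral_signCoeff_le (hB : B.IsHadamard)
    (hs : ∀ j, |s j| = 1) (x : EuclideanSpace ℝ ι) {g : ℝ → ℝ} {L : ℝ≥0} (hd : Differentiable ℝ g)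
    (hg : LipschitzWith L g) :
    |∫ t, g (‖x‖ * t) ∂gaussianReal 0 1
        - ∫ ε : (ι → ℝ) × (ι → ℝ), g (ε.1 ⬝ᵥ signCoeff B s x.ofLp ε.2)
          ∂(randomSigns ι).prod (randomSigns ι)|
      ≤ 6 * L * ‖x‖ / √(Fintype.card ι) := by
  obtain rfl | hx := eq_or_ne x 0
  · simp [signCoeff]
  have hx : 0 < ‖x‖ := norm_pos_iff.2 hx
  have hcg := hg.continuous
  have hcond : ∀ᵐ e₂ ∂randomSigns ι,
      ‖∫ t, g (‖x‖ * t) ∂gaussianReal 0 1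
        - ∫ e₁, g (e₁ ⬝ᵥ signCoeff B s x.ofLp e₂) ∂randomSigns ι‖
      ≤ 10 / 3 * L / ‖x‖ ^ 2 * ∑ j, |signCoeff B s x.ofLp e₂ j| ^ 3 := by
    filter_upwards [ae_sq_eq_one_randomSigns] with e₂ he₂
    rw [norm_sub_rev, norm_eq_abs, div_mul_eq_mul_div]
    exact abs_integral_dotProduct_sub_integral_gaussianReal_le hx (sum_sq_signCoeff hB hs x he₂)
      hd hg
  have hsqrt3 : √3 ≤ 9 / 5 := by
    rw [sqrt_le_left (by norm_num)]
    norm_num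
  calc |∫ t, g (‖x‖ * t) ∂gaussianReal 0 1
        - ∫ ε : (ι → ℝ) × (ι → ℝ), g (ε.1 ⬝ᵥ signCoeff B s x.ofLp ε.2)
          ∂(randomSigns ι).prod (randomSigns ι)|
      ≤ ∫ e₂, 10 / 3 * L / ‖x‖ ^ 2 * ∑ j, |signCoeff B s x.ofLp e₂ j| ^ 3 ∂randomSigns ι :=
        norm_sub_integral_prod_le_of_ae_le
          (φ := fun ε : (ι → ℝ) × (ι → ℝ) ↦ g (ε.1 ⬝ᵥ signCoeff B s x.ofLp ε.2))
          (integrable_randomSigns_prod (by fun_prop)) (integrable_randomSigns (by fun_prop)) hcond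
    _ ≤ 10 / 3 * L / ‖x‖ ^ 2 * (√3 * ‖x‖ ^ 3 / √(Fintype.card ι)) := by
        rw [integral_const_mul]
        gcongr
        exact integral_sum_abs_signCoeff_pow_three_le hB hs x
    _ = 10 / 3 * √3 * L * ‖x‖ / √(Fintype.card ι) := by field_simp
    _ ≤ 6 * L * ‖x‖ / √(Fintype.card ι) := by
        gcongr
        linarith

theorem stmt_12_general {A : Matrix ι ι ℝ} (hA : ∀ i j, |A i j| = 1) (hB : B.IsHadamard)
    (x : EuclideanSpace ℝ ι) {g : ℝ → ℝ} {L : ℝ≥0} (hd : Differentiable ℝ g)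
    (hg : LipschitzWith L g) :
    |1 / (Fintype.card ι : ℝ) * ∑ i,
        ∫ G : ι → ι → ℝ, g ((Matrix.of G).mulVec x i)
          ∂(Measure.pi fun _ : ι ↦ Measure.pi fun _ : ι ↦ gaussianReal 0 1)
      - 1 / (Fintype.card ι : ℝ) * ∑ i,
        ∫ ε : (ι → ℝ) × (ι → ℝ),
          g (((√(Fintype.card ι))⁻¹ •
            (A * Matrix.diagonal ε.1 * B * Matrix.diagonal ε.2)).mulVec x i)
          ∂(randomSigns ι).prod (randomSigns ι)|
      ≤ 6 * L * ‖x‖ / √(Fintype.card ι) := by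
  simp only [integral_mulVec_apply_pi_gaussianReal x hg.continuous,
    smul_mul_diagonal_mulVec_apply]
  rw [← mul_sub, ← Finset.sum_sub_distrib, abs_mul, abs_of_nonneg (by positivity)]
  calc 1 / (Fintype.card ι : ℝ) * |∑ i, (∫ t, g (‖x‖ * t) ∂gaussianReal 0 1
          - ∫ ε : (ι → ℝ) × (ι → ℝ), g (ε.1 ⬝ᵥ signCoeff B (A i) x.ofLp ε.2)
            ∂(randomSigns ι).prod (randomSigns ι))|
      ≤ 1 / (Fintype.card ι : ℝ) * ∑ _i : ι, 6 * L * ‖x‖ / √(Fintype.card ι) := by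
        gcongr
        refine (Finset.abs_sum_le_sum_abs _ _).trans (Finset.sum_le_sum fun i _ ↦ ?_)
        exact abs_integral_gaussianReal_sub_integral_signCoeff_le hB (hA i) x hd hg
    _ = 6 * L * ‖x‖ / √(Fintype.card ι) := by
        rw [Finset.sum_const, Finset.card_univ, nsmul_eq_mul, one_div,
          inv_mul_cancel_left₀ (Nat.cast_ne_zero.2 Fintype.card_ne_zero)]

end RandomizedHadamard

/-- for `d = 2^n`, `x ∈ ℝ^d`, `z = Gx` with `G` a matrix of i.i.d. `N(0,1)`
entries, and `y = √d·H·D₁·H·D₂·x` with `D₁, D₂` independent random sign diagonal matrices,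
every differentiable `g` with `|g| ≤ 1` and `|g'| ≤ 1` satisfies
`|(1/d)·Σᵢ E[g(z(i))] − (1/d)·Σᵢ E[g(y(i))]| ≤ 6‖x‖₂/√d`. -/
theorem stmt_12 (n : ℕ) (x : EuclideanSpace ℝ (Fin (2 ^ n)))
    (g : ℝ → ℝ) (hg : Differentiable ℝ g)
    (hg1 : ∀ t, |g t| ≤ 1) (hg2 : ∀ t, |deriv g t| ≤ 1) :
    |(1 / (2 ^ n : ℝ)) * ∑ i : Fin (2 ^ n),
        (∫ G : Fin (2 ^ n) → Fin (2 ^ n) → ℝ, g ((Matrix.of G).mulVec x i)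
          ∂(Measure.pi fun _ : Fin (2 ^ n) => Measure.pi fun _ : Fin (2 ^ n) => gaussianReal 0 1))
      - (1 / (2 ^ n : ℝ)) * ∑ i : Fin (2 ^ n),
        (∫ ε : (Fin (2 ^ n) → ℝ) × (Fin (2 ^ n) → ℝ),
          g ((Real.sqrt (2 ^ n) •
              (hadamardMatrix n * Matrix.diagonal ε.1 *
                hadamardMatrix n * Matrix.diagonal ε.2)).mulVec x i)
          ∂((Measure.pi fun _ : Fin (2 ^ n) => rademacher).prod
              (Measure.pi fun _ : Fin (2 ^ n) => rademacher)))|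
      ≤ 6 * ‖x‖ / Real.sqrt (2 ^ n) := by
  have hlip : LipschitzWith 1 g := lipschitzWith_of_nnnorm_deriv_le hg hg2
  have hscale : (√(2 ^ n))⁻¹ * 2 ^ n = √((2 : ℝ) ^ n) := by rw [inv_mul_eq_div, div_sqrt]
  simpa [smul_smul, mul_assoc, hscale] using
    stmt_12_general (abs_sqrt_smul_hadamardMatrix_apply n)
      (isHadamard_sqrt_smul_hadamardMatrix n) x hg hlip
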